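/- In a nilpotent Lie algebra L over ℚ, the Baker-Campbell-Hausdorff product makes L_0 (or L itself) into a group, with identity 0 and inverse x ↦ -x. -/

import Mathlib

namespace Paper

variable {L : Type*} [LieRing L] [LieAlgebra ℚ L]

/-- The right-nested iterated bracket of a word: `[x₁,[x₂,[…,xₙ]…]]`. -/
def wordBracket : List L → L
  | [] => 0
  | [a] => a
  | a :: rest => ⁅a, wordBracket rest⁆

/-- The Dynkin term `[x^{p₁} y^{q₁} ⋯ x^{pₙ} y^{qₙ}]` of the
Baker-Campbell-Hausdorff series. -/
def dynkinTerm (x y : L) (ps : List (ℕ × ℕ)) : L :=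
  wordBracket ((ps.map fun pq => List.replicate pq.1 x ++ List.replicate pq.2 y)).flatten

/-- The Dynkin coefficient
`(-1)^{n-1} / (n ⬝ Σᵢ(pᵢ+qᵢ) ⬝ ∏ᵢ pᵢ! qᵢ!)` of the Baker-Campbell-Hausdorff series
(zero on invalid index lists containing a pair `(0,0)`). -/
def dynkinCoeff (ps : List (ℕ × ℕ)) : ℚ :=
  if ps.all fun pq => 0 < pq.1 + pq.2 then
    (-1 : ℚ) ^ (ps.length - 1) /
      ((ps.length : ℚ) * (((ps.map fun pq => pq.1 + pq.2).sum : ℕ) : ℚ) *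
        (((ps.map fun pq => pq.1.factorial * pq.2.factorial).prod : ℕ) : ℚ))
  else 0

/-- The Baker-Campbell-Hausdorff product given by Dynkin's explicit formula.  In a
nilpotent Lie algebra with `lowerCentralSeries ℚ L L N = ⊥` all terms of bracket length
`≥ N` vanish, so the truncation below is the full (finite) BCH series. -/
noncomputable def bch (N : ℕ) (x y : L) : L :=
  ∑ n ∈ Finset.range N, ∑ f : Fin (n + 1) → Fin (N + 1) × Fin (N + 1),
    dynkinCoeff (List.ofFn fun i => (((f i).1 : ℕ), ((f i).2 : ℕ))) •
      dynkinTerm x y (List.ofFn fun i => (((f i).1 : ℕ), ((f i).2 : ℕ)))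

/-!
Dynkin's formula is the image in `L` of an identity between power series in two non-commuting
variables.  In the free associative algebra on a set `X`, cut off after degree `N`, exponentials and
logarithms of elements without constant term are finite sums, `exp` is injective, and
`log (exp x * exp y)` makes sense.

*Friedrichs' theorem*: `log (exp x * exp y)` lies in every Lie subalgebra `K` containing `x` and
`y`.  Put `Z(t) = log (exp (t x) * exp (t y))` and `D = d/dt`.  The logarithmic derivative
`exp Z * D (exp (-Z))` has coefficients in `K`, because it is a sum of terms of the form
`exp P * D (exp (-P))` with `P = t x, t y`, conjugated by exponentials of elements of `K[t]`.  It
also equals `-∑ (k + 1)!⁻¹ • (ad Z) ^ k (D Z)`, and since `Z(0) = 0` its coefficient of `t ^ m` is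
`-(m + 1) Z_{m + 1}` up to brackets of lower coefficients of `Z`.  By induction all coefficients of
`Z` lie in `K`.

By the Dynkin–Specht–Wever theorem, normalized bracketing of words maps a Lie polynomial in letters
to the same Lie polynomial evaluated in `L`.  It sends `log (exp x * exp y)` to Dynkin's series, and
it kills words of length greater than `N` when the `N`-th term of the lower central series is zero.
Lifting elements of `L` to the free Lie algebra on the set `L`, the product `bch` therefore
corresponds to multiplication of exponentials, and the group laws are inherited from there.
-/

section TruncEval

open PowerSeries

variable {k R S : Type*} [CommRing k] [Ring R] [Algebra k R] [Ring S] [Algebra k S]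

/-- The value at `a` of the power series `f`, truncated below degree `n`.  If `a ^ n = 0`, this is
the value of the whole series at the nilpotent element `a`. -/
noncomputable def truncEval (n : ℕ) (f : k⟦X⟧) (a : R) : R :=
  Polynomial.aeval a (trunc n f)

theorem truncEval_eq_sum (n : ℕ) (f : k⟦X⟧) (a : R) :
    truncEval n f a = ∑ i ∈ Finset.range n, coeff i f • a ^ i := by
  rw [truncEval, Polynomial.aeval_def, eval₂_trunc_eq_sum_range]
  simp only [Algebra.smul_def]

theorem map_truncEval (φ : R →ₐ[k] S) (n : ℕ) (f : k⟦X⟧) (a : R) :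
    φ (truncEval n f a) = truncEval n f (φ a) :=
  (Polynomial.aeval_algHom_apply φ a _).symm

theorem truncEval_congr {n : ℕ} {f g : k⟦X⟧} (h : X ^ n ∣ f - g) (a : R) :
    truncEval n f a = truncEval n g a := by
  rw [truncEval_eq_sum, truncEval_eq_sum]
  refine Finset.sum_congr rfl fun i hi => ?_
  rw [sub_eq_zero.1 ((map_sub (coeff i) f g).symm.trans
    (X_pow_dvd_iff.1 h i (Finset.mem_range.1 hi)))]

theorem truncEval_coe {n : ℕ} {a : R} (ha : a ^ n = 0) (p : Polynomial k) :
    truncEval n (p : k⟦X⟧) a = Polynomial.aeval a p := by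
  have hdvd : Polynomial.X ^ n ∣ trunc n (p : k⟦X⟧) - p := by
    rw [Polynomial.X_pow_dvd_iff]
    intro d hd
    rw [Polynomial.coeff_sub, coeff_trunc, if_pos hd, Polynomial.coeff_coe, sub_self]
  obtain ⟨q, hq⟩ := hdvd
  rw [truncEval, ← sub_eq_zero, ← map_sub, hq, map_mul, map_pow, Polynomial.aeval_X, ha, zero_mul]

theorem truncEval_mul {n : ℕ} {a : R} (ha : a ^ n = 0) (f g : k⟦X⟧) :
    truncEval n (f * g) a = truncEval n f a * truncEval n g a := by
  rw [truncEval, truncEval, truncEval, ← map_mul, ← truncEval_coe ha (_ * _), truncEval,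
    Polynomial.coe_mul, trunc_trunc_mul_trunc]

/-- Evaluation of power series at an element `a` with `a ^ n = 0`, as an algebra homomorphism. -/
noncomputable def truncEvalHom {n : ℕ} {a : R} (ha : a ^ n = 0) : k⟦X⟧ →ₐ[k] R :=
  AlgHom.ofLinearMap
    { toFun := fun f => truncEval n f a
      map_add' := fun f g => by simp only [truncEval, map_add]
      map_smul' := fun c f => by
        simp only [truncEval_eq_sum, map_smul, smul_assoc, Finset.smul_sum, RingHom.id_apply] }
    (by
      change truncEval n 1 a = 1
      rw [← Polynomial.coe_one, truncEval_coe ha, map_one]) (truncEval_mul ha)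

theorem truncEvalHom_apply {n : ℕ} {a : R} (ha : a ^ n = 0) (f : k⟦X⟧) :
    truncEvalHom ha f = truncEval n f a :=
  rfl

theorem truncEvalHom_coe {n : ℕ} {a : R} (ha : a ^ n = 0) (p : Polynomial k) :
    truncEvalHom ha (p : k⟦X⟧) = Polynomial.aeval a p :=
  truncEval_coe ha p

theorem truncEval_pow_eq_zero {n : ℕ} {a : R} (ha : a ^ n = 0) {f : k⟦X⟧}
    (hf : constantCoeff f = 0) : truncEval n f a ^ n = 0 := by
  obtain ⟨g, rfl⟩ := X_dvd_iff.2 hf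
  rw [← truncEvalHom_apply ha, ← map_pow, mul_pow, map_mul, map_pow, ← Polynomial.coe_X,
    truncEvalHom_coe, Polynomial.aeval_X, ha, zero_mul]

theorem truncEval_subst {n : ℕ} {a : R} (ha : a ^ n = 0) (f : k⟦X⟧) {g : k⟦X⟧}
    (hg : constantCoeff g = 0) :
    truncEval n (f.subst g) a = truncEval n f (truncEval n g a) := by
  have hsubst : HasSubst g := HasSubst.of_constantCoeff_zero' hg
  have hdvd : X ^ n ∣ f.subst g - (trunc n f : k⟦X⟧).subst g := by
    obtain ⟨h, hh⟩ : X ^ n ∣ f - (trunc n f : k⟦X⟧) := by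
      rw [X_pow_dvd_iff]
      intro d hd
      rw [map_sub, coeff_coe_trunc_of_lt hd, sub_self]
    rw [← subst_sub hsubst, hh, subst_mul hsubst, subst_pow hsubst, subst_X hsubst]
    exact (pow_dvd_pow_of_dvd (X_dvd_iff.2 hg) n).mul_right _
  rw [truncEval_congr hdvd, subst_coe hsubst, ← truncEvalHom_apply ha,
    ← Polynomial.aeval_algHom_apply, truncEvalHom_apply, ← truncEval]

end TruncEval

section ExpLog

open PowerSeries

theorem one_add_X_mul_derivative_log : (1 + X) * d⁄dX ℚ (log ℚ) = 1 := by
  rw [deriv_log]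
  ext n
  cases n with
  | zero => simp
  | succ n =>
    rw [add_mul, one_mul, map_add, mul_comm, coeff_succ_mul_X]
    simp [pow_succ, coeff_one]

theorem constantCoeff_exp_sub_one : constantCoeff (exp ℚ - 1) = 0 := by
  rw [map_sub, constantCoeff_exp, map_one, sub_self]

theorem log_subst_exp_sub_one : (log ℚ).subst (exp ℚ - 1) = X := by
  have hs : HasSubst (exp ℚ - 1) := HasSubst.exp_sub_one
  refine derivative.ext ?_ ?_
  · have h := congr_arg (subst (exp ℚ - 1)) one_add_X_mul_derivative_log
    rw [subst_mul hs, subst_add hs, subst_X hs, ← coe_substAlgHom hs, map_one,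
      add_sub_cancel, coe_substAlgHom, mul_comm] at h
    rw [derivative_subst hs, map_sub, derivative_exp, Derivation.map_one_eq_zero, sub_zero, h,
      derivative_X]
  · rw [constantCoeff_X]
    exact constantCoeff_subst_eq_zero constantCoeff_exp_sub_one _ constantCoeff_log

theorem constantCoeff_exp_subst_log : constantCoeff ((exp ℚ).subst (log ℚ)) = 1 := by
  have h : constantCoeff ((exp ℚ - 1).subst (log ℚ)) = 0 :=
    constantCoeff_subst_eq_zero constantCoeff_log _ constantCoeff_exp_sub_one
  rwa [subst_sub HasSubst.log, ← coe_substAlgHom HasSubst.log, map_one, map_sub, map_one,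
    sub_eq_zero, coe_substAlgHom] at h

theorem exp_subst_log : (exp ℚ).subst (log ℚ) = 1 + X := by
  set D := d⁄dX ℚ
  set E := (exp ℚ).subst (log ℚ)
  have hlog : (1 + X) * D (log ℚ) = 1 := one_add_X_mul_derivative_log
  have hE : D E = E * D (log ℚ) := by
    rw [derivative_subst HasSubst.log, derivative_exp]
  have hlog' : D (D (log ℚ)) = -D (log ℚ) ^ 2 := by
    have h := congr_arg D hlog
    simp only [D, Derivation.leibniz, map_add, Derivation.map_one_eq_zero, derivative_X,
      smul_eq_mul] at h
    linear_combination D (log ℚ) * h - D (D (log ℚ)) * hlog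
  have hone : E * D (log ℚ) = 1 := by
    refine derivative.ext ?_ ?_
    · change D _ = D 1
      rw [Derivation.leibniz, smul_eq_mul, smul_eq_mul, hE, hlog', Derivation.map_one_eq_zero]
      ring
    · have h := congr_arg constantCoeff hlog
      rw [map_mul, map_add, map_one, constantCoeff_X, add_zero, one_mul] at h
      rw [map_mul, h, mul_one, map_one, constantCoeff_exp_subst_log]
  linear_combination (1 + X) * hone - E * hlog

variable {R : Type*} [Ring R] [Algebra ℚ R] {n : ℕ} {a : R}

theorem exp_eq_truncEval (ha : a ^ n = 0) : IsNilpotent.exp a = truncEval n (exp ℚ) a := by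
  simp [IsNilpotent.exp_eq_sum ha, truncEval_eq_sum]

theorem isNilpotent_truncEval_log (ha : a ^ n = 0) : IsNilpotent (truncEval n (log ℚ) a) :=
  ⟨n, truncEval_pow_eq_zero ha constantCoeff_log⟩

theorem exp_truncEval_log (ha : a ^ n = 0) :
    IsNilpotent.exp (truncEval n (log ℚ) a) = 1 + a := by
  rw [exp_eq_truncEval (truncEval_pow_eq_zero ha constantCoeff_log),
    ← truncEval_subst ha _ constantCoeff_log, exp_subst_log, ← truncEvalHom_apply ha, map_add,
    map_one, ← Polynomial.coe_X, truncEvalHom_coe, Polynomial.aeval_X]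

theorem truncEval_log_exp_sub_one (ha : a ^ n = 0) :
    truncEval n (log ℚ) (IsNilpotent.exp a - 1) = a := by
  have h : IsNilpotent.exp a - 1 = truncEval n (exp ℚ - 1) a := by
    rw [← truncEvalHom_apply ha, map_sub, map_one, truncEvalHom_apply, exp_eq_truncEval ha]
  rw [h, ← truncEval_subst ha _ constantCoeff_exp_sub_one, log_subst_exp_sub_one,
    ← Polynomial.coe_X, truncEval_coe ha, Polynomial.aeval_X]

theorem eq_of_exp_eq_exp {b : R} (ha : IsNilpotent a) (hb : IsNilpotent b)
    (h : IsNilpotent.exp a = IsNilpotent.exp b) : a = b := by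
  obtain ⟨m, hm⟩ := ha
  obtain ⟨n, hn⟩ := hb
  rw [← truncEval_log_exp_sub_one (pow_eq_zero_of_le (le_max_left m n) hm), h,
    truncEval_log_exp_sub_one (pow_eq_zero_of_le (le_max_right m n) hn)]

end ExpLog

section LogDeriv

open IsNilpotent (exp)

attribute [local instance] LieRing.ofAssociativeRing

variable {R : Type*} [Ring R] [Algebra ℚ R] {a : R}

theorem exp_mul_mul_exp_neg (ha : IsNilpotent a) (b : R) :
    exp a * b * exp (-a) = exp (LieAlgebra.ad ℚ R a) b := by
  have hleft : exp (LinearMap.mulLeft ℚ a) = LinearMap.mulLeft ℚ (exp a) :=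
    (ha.map_exp (Algebra.lmul ℚ R)).symm
  have hright : exp (LinearMap.mulRight ℚ (-a)) =
      LinearMap.mulRight ℚ (exp (-a)) := by
    obtain ⟨n, hn⟩ := ha.neg
    ext x
    have hn' : LinearMap.mulRight ℚ (-a) ^ n = 0 := by simp [LinearMap.pow_mulRight, hn]
    rw [IsNilpotent.exp_eq_sum hn, IsNilpotent.exp_eq_sum hn']
    simp [LinearMap.pow_mulRight, Finset.mul_sum]
  have had : LieAlgebra.ad ℚ R a = LinearMap.mulLeft ℚ a + LinearMap.mulRight ℚ (-a) := by
    ext x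
    simp [LieRing.of_associative_ring_bracket, sub_eq_add_neg]
  rw [had, IsNilpotent.exp_add_of_commute (LinearMap.commute_mulLeft_right a (-a))
    ((LinearMap.isNilpotent_mulLeft_iff ℚ a).2 ha)
    ((LinearMap.isNilpotent_mulRight_iff ℚ (-a)).2 ha.neg), hleft, hright]
  simp [mul_assoc]

theorem ad_pow_mem (K : LieSubalgebra ℚ R) (ha : a ∈ K) {b : R} (hb : b ∈ K) (k : ℕ) :
    ((LieAlgebra.ad ℚ R a) ^ k) b ∈ K := by
  induction k with
  | zero => exact hb
  | succ k ih =>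
    rw [pow_succ', Module.End.mul_apply, LieAlgebra.ad_apply]
    exact K.lie_mem ha ih

theorem exp_mul_mul_exp_neg_mem {K : LieSubalgebra ℚ R} (ha : IsNilpotent a) (haK : a ∈ K) {b : R}
    (hb : b ∈ K) : exp a * b * exp (-a) ∈ K := by
  rw [exp_mul_mul_exp_neg ha, IsNilpotent.exp, LinearMap.sum_apply]
  exact sum_mem fun k _ => K.smul_mem _ (ad_pow_mem K haK hb k)

theorem ad_lmul_pow_succ {δ : Module.End ℚ R} (hδ : ∀ x y, δ (x * y) = δ x * y + x * δ y) (a : R)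
    (k : ℕ) : ((LieAlgebra.ad ℚ (Module.End ℚ R) (Algebra.lmul ℚ R a)) ^ (k + 1)) δ =
      -Algebra.lmul ℚ R (((LieAlgebra.ad ℚ R a) ^ k) (δ a)) := by
  induction k with
  | zero =>
    ext x
    simp [LieRing.of_associative_ring_bracket, hδ]
  | succ k ih =>
    rw [pow_succ', Module.End.mul_apply, ih, pow_succ', Module.End.mul_apply]
    rw [map_neg, LieAlgebra.ad_apply, LieRing.of_associative_ring_bracket, ← map_mul, ← map_mul,
      ← map_sub, LieAlgebra.ad_apply, LieRing.of_associative_ring_bracket]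

theorem exp_mul_map_exp_neg (ha : IsNilpotent a) {δ : Module.End ℚ R}
    (hδ : ∀ x y, δ (x * y) = δ x * y + x * δ y) :
    ∃ n, exp a * δ (exp (-a)) =
      -∑ k ∈ Finset.range (n + 1),
        ((k + 1).factorial : ℚ)⁻¹ • ((LieAlgebra.ad ℚ R a) ^ k) (δ a) := by
  -- Conjugate `δ` by left multiplication with `exp a` inside `Module.End ℚ R`, and apply to `1`.
  have hlmul : IsNilpotent (Algebra.lmul ℚ R a) := ha.map _
  obtain ⟨n, hn⟩ := LieAlgebra.ad_nilpotent_of_nilpotent (R := ℚ) hlmul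
  have hone : δ 1 = 0 := by simpa using hδ 1 1
  have h := LinearMap.congr_fun (exp_mul_mul_exp_neg hlmul δ) 1
  rw [IsNilpotent.exp_eq_sum (pow_eq_zero_of_le (Nat.le_add_right n 2) hn), ← map_neg, ← ha.map_exp,
    ← ha.neg.map_exp] at h
  refine ⟨n, ?_⟩
  simp only [Finset.sum_range_succ' _ (n + 1), LinearMap.add_apply, LinearMap.sum_apply,
    LinearMap.smul_apply, ad_lmul_pow_succ hδ] at h
  simpa [hone] using h

theorem logDeriv_mem {K : LieSubalgebra ℚ R} {δ : Module.End ℚ R}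
    (hδ : ∀ x y, δ (x * y) = δ x * y + x * δ y) (ha : IsNilpotent a) (haK : a ∈ K) (hδa : δ a ∈ K) :
    exp a * δ (exp (-a)) ∈ K := by
  obtain ⟨n, hn⟩ := exp_mul_map_exp_neg ha hδ
  rw [hn]
  exact neg_mem (sum_mem fun k _ => K.smul_mem _ (ad_pow_mem K haK hδa k))

theorem logDeriv_mul_mem {K : LieSubalgebra ℚ R} {δ : Module.End ℚ R}
    (hδ : ∀ x y, δ (x * y) = δ x * y + x * δ y) (hδK : ∀ x ∈ K, δ x ∈ K) {p q r : R}
    (hp : IsNilpotent p) (hq : IsNilpotent q) (hr : IsNilpotent r) (hpK : p ∈ K) (hqK : q ∈ K)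
    (h : exp r = exp p * exp q) :
    exp r * δ (exp (-r)) ∈ K := by
  have hinv : exp (-r) = exp (-q) * exp (-p) := by
    refine left_inv_eq_right_inv (IsNilpotent.exp_neg_mul_exp_self hr) ?_
    rw [h, mul_assoc, ← mul_assoc _ _ (exp (-p)), IsNilpotent.exp_mul_exp_neg_self hq,
      one_mul, IsNilpotent.exp_mul_exp_neg_self hp]
  have hcocycle : exp r * δ (exp (-r)) =
      exp p * (exp q * δ (exp (-q))) * exp (-p) +
        exp p * δ (exp (-p)) := by
    rw [h, hinv, hδ, mul_add, mul_assoc _ _ (_ * δ _), ← mul_assoc _ _ (δ _),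
      IsNilpotent.exp_mul_exp_neg_self hq]
    noncomm_ring
  rw [hcocycle]
  exact add_mem (exp_mul_mul_exp_neg_mem hp hpK (logDeriv_mem hδ hq hqK (hδK q hqK)))
    (logDeriv_mem hδ hp hpK (hδK p hpK))

end LogDeriv

section PolynomialCurve

open IsNilpotent (exp)
open Polynomial
open Finset.HasAntidiagonal (antidiagonal mem_antidiagonal)

attribute [local instance] LieRing.ofAssociativeRing

variable {R : Type*} [Ring R]

theorem coeff_lie (p q : R[X]) (n : ℕ) :
    ⁅p, q⁆.coeff n = ∑ ij ∈ antidiagonal n, ⁅p.coeff ij.1, q.coeff ij.2⁆ := by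
  simp only [LieRing.of_associative_ring_bracket, coeff_sub, coeff_mul, Finset.sum_sub_distrib]
  rw [← Finset.Nat.sum_antidiagonal_swap (f := fun ij => q.coeff ij.1 * p.coeff ij.2)]
  rfl

variable [Algebra ℚ R] {K : LieSubalgebra ℚ R} {Z : R[X]}

/-- The Lie algebra `K[t]` of polynomials with coefficients in `K`, inside `R[t]`. -/
def coeffLieSubalgebra (K : LieSubalgebra ℚ R) : LieSubalgebra ℚ R[X] where
  carrier := {p | ∀ n, p.coeff n ∈ K}
  add_mem' hp hq n := by
    rw [coeff_add]
    exact add_mem (hp n) (hq n)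
  zero_mem' n := by
    rw [coeff_zero]
    exact zero_mem K
  smul_mem' c p hp n := by
    rw [coeff_smul]
    exact K.smul_mem c (hp n)
  lie_mem' hp hq n := by
    rw [coeff_lie]
    exact sum_mem fun ij _ => K.lie_mem (hp ij.1) (hq ij.2)

theorem coeff_derivative_mem_iff {n : ℕ} :
    (derivative Z).coeff n ∈ K ↔ Z.coeff (n + 1) ∈ K := by
  have h : (derivative Z).coeff n = ((n + 1 : ℕ) : ℚ) • Z.coeff (n + 1) := by
    rw [coeff_derivative, Nat.cast_smul_eq_nsmul, nsmul_eq_mul, ← Nat.cast_succ, Nat.cast_comm]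
  rw [h]
  exact K.toSubmodule.smul_mem_iff (Nat.cast_ne_zero.2 n.succ_ne_zero)

theorem derivative_mem_coeffLieSubalgebra (h : Z ∈ coeffLieSubalgebra K) :
    derivative Z ∈ coeffLieSubalgebra K :=
  fun n => coeff_derivative_mem_iff.2 (h (n + 1))

theorem coeff_lie_mem {m : ℕ} (hZ : Z.coeff 0 = 0) (hZK : ∀ j ≤ m, Z.coeff j ∈ K) {P : R[X]}
    (hP : ∀ j < m, P.coeff j ∈ K) : ∀ j ≤ m, ⁅Z, P⁆.coeff j ∈ K := by
  intro j hj
  rw [coeff_lie]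
  refine sum_mem fun ⟨i, l⟩ hil => ?_
  rw [mem_antidiagonal] at hil
  rcases Nat.eq_zero_or_pos i with rfl | hi
  · rw [hZ, zero_lie]
    exact zero_mem K
  · exact K.lie_mem (hZK i (by lia)) (hP l (by lia))

theorem coeff_ad_pow_derivative_mem {m : ℕ} (hZ : Z.coeff 0 = 0)
    (hZK : ∀ j ≤ m, Z.coeff j ∈ K) (k : ℕ) :
    (((LieAlgebra.ad ℚ R[X] Z) ^ (k + 1)) (derivative Z)).coeff m ∈ K := by
  suffices h : ∀ k, ∀ j < m, (((LieAlgebra.ad ℚ R[X] Z) ^ k) (derivative Z)).coeff j ∈ K by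
    rw [pow_succ', Module.End.mul_apply]
    exact coeff_lie_mem hZ hZK (h k) m le_rfl
  intro k
  induction k with
  | zero => exact fun j hj => coeff_derivative_mem_iff.2 (hZK (j + 1) hj)
  | succ k ih =>
    rw [pow_succ', Module.End.mul_apply]
    exact fun j hj => coeff_lie_mem hZ hZK ih j hj.le

theorem mem_of_logDeriv_mem (hZ : Z.coeff 0 = 0) (hnil : IsNilpotent Z)
    (h : exp Z * derivative (exp (-Z)) ∈ coeffLieSubalgebra K) : Z ∈ coeffLieSubalgebra K := by
  obtain ⟨n, hn⟩ := exp_mul_map_exp_neg hnil (δ := derivative.restrictScalars ℚ)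
    (fun _ _ => derivative_mul)
  simp only [LinearMap.restrictScalars_apply] at hn
  rw [hn, neg_mem_iff, Finset.sum_range_succ'] at h
  intro m
  induction m using Nat.strong_induction_on with
  | _ m ih =>
    cases m with
    | zero =>
      rw [hZ]
      exact zero_mem K
    | succ m =>
      have hK := h m
      rw [coeff_add, finsetSum_coeff] at hK
      have hhigher := sum_mem (t := Finset.range n) fun k _ => K.smul_mem
        (((k + 1 + 1).factorial : ℚ)⁻¹)
        (coeff_ad_pow_derivative_mem hZ (fun j hj => ih j (Nat.lt_succ_of_le hj)) k)
      simpa [coeff_derivative_mem_iff] using (add_mem_cancel_left hhigher).1 hK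

theorem mem_of_exp_eq_exp_mul_exp {p q : R[X]} (hp : IsNilpotent p) (hq : IsNilpotent q)
    (hnil : IsNilpotent Z) (hpK : p ∈ coeffLieSubalgebra K) (hqK : q ∈ coeffLieSubalgebra K)
    (hZ : Z.coeff 0 = 0) (h : exp Z = exp p * exp q) : Z ∈ coeffLieSubalgebra K := by
  refine mem_of_logDeriv_mem hZ hnil ?_
  exact logDeriv_mul_mem (K := coeffLieSubalgebra K) (δ := derivative.restrictScalars ℚ)
    (fun x y => derivative_mul (f := x) (g := y)) (fun _ => derivative_mem_coeffLieSubalgebra)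
    hp hq hnil hpK hqK h

end PolynomialCurve

section Words

open scoped Pointwise

variable {X : Type*}

/-- The free associative `ℚ`-algebra on `X`, with its basis of words. -/
abbrev WordAlgebra (X : Type*) := MonoidAlgebra ℚ (FreeMonoid X)

/-- A word as an element of the free associative algebra. -/
noncomputable def word (w : FreeMonoid X) : WordAlgebra X := MonoidAlgebra.of ℚ _ w

theorem word_one : word (1 : FreeMonoid X) = 1 := map_one (MonoidAlgebra.of ℚ _)

theorem word_mul (v w : FreeMonoid X) : word (v * w) = word v * word w :=
  map_mul (MonoidAlgebra.of ℚ _) v w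

theorem word_pow (w : FreeMonoid X) (n : ℕ) : word (w ^ n) = word w ^ n :=
  map_pow (MonoidAlgebra.of ℚ _) w n

/-- A generator of the free associative algebra. -/
noncomputable def letter (x : X) : WordAlgebra X := word (FreeMonoid.of x)

/-- The span of the words whose length lies in `S`.  The homogeneous part of degree `n` is
`wordSpan X {n}`, and the `n`-th step of the length filtration is `wordSpan X (Set.Ici n)`. -/
noncomputable def wordSpan (X : Type*) (S : Set ℕ) : Submodule ℚ (WordAlgebra X) :=
  Submodule.span ℚ (word '' {w | w.length ∈ S})

variable {S T : Set ℕ} {a b : WordAlgebra X}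

theorem word_mem_wordSpan {w : FreeMonoid X} (h : w.length ∈ S) : word w ∈ wordSpan X S :=
  Submodule.subset_span ⟨w, h, rfl⟩

theorem letter_mem_wordSpan (x : X) : letter x ∈ wordSpan X {1} :=
  word_mem_wordSpan (FreeMonoid.length_of x)

theorem wordSpan_mono (h : S ⊆ T) : wordSpan X S ≤ wordSpan X T :=
  Submodule.span_mono (Set.image_mono fun _ hw => h hw)

theorem wordSpan_le {M : Submodule ℚ (WordAlgebra X)} :
    wordSpan X S ≤ M ↔ ∀ w : FreeMonoid X, w.length ∈ S → word w ∈ M := by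
  rw [wordSpan, Submodule.span_le, Set.image_subset_iff]
  rfl

theorem mul_mem_wordSpan (ha : a ∈ wordSpan X S) (hb : b ∈ wordSpan X T) :
    a * b ∈ wordSpan X (S + T) := by
  have h := Submodule.mul_mem_mul ha hb
  rw [wordSpan, wordSpan, Submodule.span_mul_span] at h
  refine Submodule.span_mono ?_ h
  rintro _ ⟨_, ⟨v, hv, rfl⟩, _, ⟨w, hw, rfl⟩, rfl⟩
  refine ⟨v * w, ?_, word_mul v w⟩
  rw [Set.mem_ofPred_eq, FreeMonoid.length_mul]
  exact Set.add_mem_add hv hw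

theorem mul_mem_wordSpan_Ici {m n : ℕ} (ha : a ∈ wordSpan X (Set.Ici m))
    (hb : b ∈ wordSpan X (Set.Ici n)) : a * b ∈ wordSpan X (Set.Ici (m + n)) :=
  wordSpan_mono (Set.Ici_add_Ici_subset m n) (mul_mem_wordSpan ha hb)

theorem mem_wordSpan_Ici_zero (a : WordAlgebra X) : a ∈ wordSpan X (Set.Ici 0) := by
  induction a using MonoidAlgebra.induction_linear with
  | zero => exact zero_mem _
  | add a b ha hb => exact add_mem ha hb
  | single w c =>
    have h : MonoidAlgebra.single w c = c • word w := by simp [word]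
    rw [h]
    exact Submodule.smul_mem _ c (word_mem_wordSpan w.length.zero_le)

theorem pow_mem_wordSpan (ha : a ∈ wordSpan X (Set.Ici 1)) (n : ℕ) :
    a ^ n ∈ wordSpan X (Set.Ici n) := by
  induction n with
  | zero => exact mem_wordSpan_Ici_zero _
  | succ n ih => exact pow_succ a n ▸ mul_mem_wordSpan_Ici ih ha

/-- The linear map with prescribed values on words. -/
noncomputable def linearExt {M : Type*} [AddCommGroup M] [Module ℚ M] (f : FreeMonoid X → M) :
    WordAlgebra X →ₗ[ℚ] M :=
  (MonoidAlgebra.basis (FreeMonoid X) ℚ).constr ℚ f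

theorem linearExt_word {M : Type*} [AddCommGroup M] [Module ℚ M] (f : FreeMonoid X → M)
    (w : FreeMonoid X) : linearExt f (word w) = f w := by
  simpa [linearExt, word] using (MonoidAlgebra.basis (FreeMonoid X) ℚ).constr_basis ℚ f w

end Words

section EvalWords

open Polynomial (monomial)

variable {X : Type*} {N : ℕ}

/-- Every product of more than `N` of the elements `f x` is zero. -/
def LongProdsVanish {M : Type*} [MonoidWithZero M] (N : ℕ) (f : X → M) : Prop :=
  ∀ w : FreeMonoid X, N < w.length → FreeMonoid.lift f w = 0

theorem LongProdsVanish.monomial_one {R : Type*} [Semiring R] {f : X → R}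
    (hf : LongProdsVanish N f) : LongProdsVanish N fun x => monomial 1 (f x) := by
  have lift_monomial (w : FreeMonoid X) : FreeMonoid.lift (fun x => monomial 1 (f x)) w =
      monomial w.length (FreeMonoid.lift f w) := by
    induction w using FreeMonoid.inductionOn' with
    | one => simp
    | of_mul x w ih => simp [ih, Polynomial.monomial_mul_monomial]
  intro w hw
  rw [lift_monomial, hf w hw, map_zero]

variable {R S : Type*} [Ring R] [Algebra ℚ R] [Ring S] [Algebra ℚ S] {f : X → R}

/-- The algebra homomorphism substituting the elements `f x` for the letters `x`. -/
noncomputable def evalWords (f : X → R) : WordAlgebra X →ₐ[ℚ] R :=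
  MonoidAlgebra.lift ℚ _ _ (FreeMonoid.lift f)

theorem evalWords_word (f : X → R) (w : FreeMonoid X) :
    evalWords f (word w) = FreeMonoid.lift f w :=
  MonoidAlgebra.lift_of _ _

theorem evalWords_letter (f : X → R) (x : X) : evalWords f (letter x) = f x := by
  rw [letter, evalWords_word, FreeMonoid.lift_eval_of]

namespace LongProdsVanish

theorem evalWords_eq_zero (hf : LongProdsVanish N f) {a : WordAlgebra X}
    (ha : a ∈ wordSpan X (Set.Ici (N + 1))) : evalWords f a = 0 := by
  suffices wordSpan X (Set.Ici (N + 1)) ≤ LinearMap.ker (evalWords f).toLinearMap from this ha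
  exact wordSpan_le.2 fun w hw => (evalWords_word f w).trans (hf w hw)

theorem evalWords_pow_eq_zero (hf : LongProdsVanish N f) {a : WordAlgebra X}
    (ha : a ∈ wordSpan X (Set.Ici 1)) : evalWords f a ^ (N + 1) = 0 := by
  rw [← map_pow]
  exact hf.evalWords_eq_zero (pow_mem_wordSpan ha (N + 1))

theorem pow_eq_zero (hf : LongProdsVanish N f) (x : X) : f x ^ (N + 1) = 0 := by
  rw [← evalWords_letter f x]
  exact hf.evalWords_pow_eq_zero
    (wordSpan_mono (Set.singleton_subset_iff.2 le_rfl) (letter_mem_wordSpan x))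

end LongProdsVanish

/-- The logarithm of `exp a * exp b`, with all power series cut off after degree `N`. -/
noncomputable def logMulExp (N : ℕ) (a b : R) : R :=
  truncEval (N + 1) (PowerSeries.log ℚ)
    (truncEval (N + 1) (PowerSeries.exp ℚ) a * truncEval (N + 1) (PowerSeries.exp ℚ) b - 1)

theorem map_logMulExp (φ : R →ₐ[ℚ] S) (N : ℕ) (a b : R) :
    φ (logMulExp N a b) = logMulExp N (φ a) (φ b) := by
  simp only [logMulExp, map_truncEval, map_sub, map_mul, map_one]

theorem logMulExp_zero_zero (N : ℕ) : logMulExp N (0 : R) 0 = 0 := by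
  have h : (0 : R) ^ (N + 1) = 0 := zero_pow N.succ_ne_zero
  rw [logMulExp, ← exp_eq_truncEval h, IsNilpotent.exp_zero, one_mul]
  simpa only [IsNilpotent.exp_zero] using truncEval_log_exp_sub_one h

/-- The coefficient of `x ^ p * y ^ q` in `exp x * exp y - 1`. -/
noncomputable def expMulCoeff (pq : ℕ × ℕ) : ℚ :=
  if 0 < pq.1 + pq.2 then ((pq.1.factorial * pq.2.factorial : ℕ) : ℚ)⁻¹ else 0

/-- The word `x ^ p * y ^ q` in two letters. -/
def powMulPow (pq : ℕ × ℕ) : FreeMonoid (Fin 2) :=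
  FreeMonoid.of 0 ^ pq.1 * FreeMonoid.of 1 ^ pq.2

theorem toList_powMulPow (pq : ℕ × ℕ) :
    (powMulPow pq).toList = List.replicate pq.1 0 ++ List.replicate pq.2 1 := by
  have toList_of_pow (x : Fin 2) (n : ℕ) :
      (FreeMonoid.of x ^ n).toList = List.replicate n x := by
    induction n with
    | zero => simp
    | succ n ih => simp [pow_succ', ih, List.replicate_succ]
  simp [powMulPow, toList_of_pow]

theorem length_powMulPow (pq : ℕ × ℕ) : (powMulPow pq).length = pq.1 + pq.2 := by
  simp [FreeMonoid.length, toList_powMulPow]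

theorem smul_pow_mul_smul_pow_eq {N : ℕ} (pq : Fin (N + 1) × Fin (N + 1)) :
    ((pq.1 : ℕ).factorial : ℚ)⁻¹ • letter (0 : Fin 2) ^ (pq.1 : ℕ) *
        ((pq.2 : ℕ).factorial : ℚ)⁻¹ • letter 1 ^ (pq.2 : ℕ) =
      expMulCoeff (pq.1, pq.2) • word (powMulPow (pq.1, pq.2)) + if pq = 0 then 1 else 0 := by
  rcases eq_or_ne pq 0 with rfl | h
  · simp [expMulCoeff]
  · have hpos : 0 < (pq.1 : ℕ) + pq.2 := by
      refine Nat.pos_of_ne_zero fun h0 => h ?_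
      obtain ⟨h1, h2⟩ := Nat.add_eq_zero_iff.1 h0
      exact Prod.ext (Fin.ext h1) (Fin.ext h2)
    simp [expMulCoeff, hpos, h, powMulPow, word_mul, word_pow, letter, smul_smul, mul_comm]

theorem truncEval_exp_mul_truncEval_exp_sub_one (N : ℕ) :
    truncEval (N + 1) (PowerSeries.exp ℚ) (letter (0 : Fin 2)) *
        truncEval (N + 1) (PowerSeries.exp ℚ) (letter 1) - 1 =
      ∑ pq : Fin (N + 1) × Fin (N + 1),
        expMulCoeff (pq.1, pq.2) • word (powMulPow (pq.1, pq.2)) := by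
  simp only [truncEval_eq_sum, Finset.sum_range, Finset.sum_mul_sum, ← Finset.sum_product',
    Finset.univ_product_univ, PowerSeries.coeff_exp, one_div, map_inv₀, map_natCast,
    smul_pow_mul_smul_pow_eq, Finset.sum_add_distrib]
  rw [Finset.sum_ite_eq', if_pos (Finset.mem_univ _), add_sub_cancel_right]

theorem truncEval_exp_mul_truncEval_exp_sub_one_mem (N : ℕ) :
    truncEval (N + 1) (PowerSeries.exp ℚ) (letter (0 : Fin 2)) *
      truncEval (N + 1) (PowerSeries.exp ℚ) (letter 1) - 1 ∈ wordSpan (Fin 2) (Set.Ici 1) := by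
  rw [truncEval_exp_mul_truncEval_exp_sub_one]
  refine sum_mem fun pq _ => ?_
  rcases Nat.eq_zero_or_pos ((pq.1 : ℕ) + pq.2) with h | h
  · rw [expMulCoeff, if_neg h.not_gt, zero_smul]
    exact zero_mem _
  · exact Submodule.smul_mem _ _ (word_mem_wordSpan ((length_powMulPow _).symm ▸ h))

namespace LongProdsVanish

variable {f : Fin 2 → R}

theorem truncEval_exp_mul_truncEval_exp_sub_one_pow_eq_zero (hf : LongProdsVanish N f) :
    (truncEval (N + 1) (PowerSeries.exp ℚ) (f 0) *
      truncEval (N + 1) (PowerSeries.exp ℚ) (f 1) - 1) ^ (N + 1) = 0 := by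
  have h := hf.evalWords_pow_eq_zero (truncEval_exp_mul_truncEval_exp_sub_one_mem N)
  simpa only [map_sub, map_mul, map_one, map_truncEval, evalWords_letter] using h

theorem isNilpotent_logMulExp (hf : LongProdsVanish N f) :
    IsNilpotent (logMulExp N (f 0) (f 1)) :=
  isNilpotent_truncEval_log hf.truncEval_exp_mul_truncEval_exp_sub_one_pow_eq_zero

theorem exp_logMulExp (hf : LongProdsVanish N f) :
    IsNilpotent.exp (logMulExp N (f 0) (f 1)) =
      IsNilpotent.exp (f 0) * IsNilpotent.exp (f 1) := by
  rw [logMulExp, exp_truncEval_log hf.truncEval_exp_mul_truncEval_exp_sub_one_pow_eq_zero,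
    add_sub_cancel, exp_eq_truncEval (hf.pow_eq_zero 0), exp_eq_truncEval (hf.pow_eq_zero 1)]

end LongProdsVanish

end EvalWords

section LogMulExp

open Polynomial

attribute [local instance] LieRing.ofAssociativeRing

variable {R : Type*} [Ring R] [Algebra ℚ R] {N : ℕ} {f : Fin 2 → R}

theorem coeff_zero_logMulExp_monomial_one (N : ℕ) (a b : R) :
    (logMulExp N (monomial 1 a) (monomial 1 b)).coeff 0 = 0 := by
  let ev := eval₂AlgHom (AlgHom.id ℚ R) 0 fun _ => Commute.zero_right _
  have h : ev (logMulExp N (monomial 1 a) (monomial 1 b)) = 0 := by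
    rw [map_logMulExp]
    simp [ev, logMulExp_zero_zero]
  simpa [ev, coeff_zero_eq_eval_zero] using h

theorem eval_one_logMulExp_monomial_one (N : ℕ) (a b : R) :
    (logMulExp N (monomial 1 a) (monomial 1 b)).eval 1 = logMulExp N a b := by
  have h := map_logMulExp (eval₂AlgHom (AlgHom.id ℚ R) 1 fun _ => Commute.one_right _) N
    (monomial 1 a) (monomial 1 b)
  simpa [eval_monomial] using h

theorem monomial_mem_coeffLieSubalgebra {K : LieSubalgebra ℚ R} {a : R} (ha : a ∈ K) (n : ℕ) :
    monomial n a ∈ coeffLieSubalgebra K := by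
  intro m
  rw [coeff_monomial]
  split_ifs
  exacts [ha, zero_mem K]

theorem eval_one_mem {K : LieSubalgebra ℚ R} {p : R[X]} (hp : p ∈ coeffLieSubalgebra K) :
    p.eval 1 ∈ K := by
  rw [eval_eq_sum_range]
  simpa using sum_mem fun n _ => hp n

theorem LongProdsVanish.logMulExp_mem (hf : LongProdsVanish N f) {K : LieSubalgebra ℚ R}
    (hK : ∀ i, f i ∈ K) : logMulExp N (f 0) (f 1) ∈ K := by
  have hmono := hf.monomial_one
  rw [← eval_one_logMulExp_monomial_one]
  exact eval_one_mem <| mem_of_exp_eq_exp_mul_exp ⟨_, hmono.pow_eq_zero 0⟩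
    ⟨_, hmono.pow_eq_zero 1⟩ hmono.isNilpotent_logMulExp
    (monomial_mem_coeffLieSubalgebra (hK 0) 1) (monomial_mem_coeffLieSubalgebra (hK 1) 1)
    (coeff_zero_logMulExp_monomial_one N _ _) hmono.exp_logMulExp

end LogMulExp

section DynkinSpechtWever

attribute [local instance] LieRing.ofAssociativeRing

variable {X L' : Type*} [LieRing L'] [LieAlgebra ℚ L'] {a b : WordAlgebra X} {N : ℕ}

theorem wordBracket_cons {M : Type*} [LieRing M] (a : M) {l : List M} (hl : l ≠ []) :
    wordBracket (a :: l) = ⁅a, wordBracket l⁆ := by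
  cases l with
  | nil => exact absurd rfl hl
  | cons b l => rfl

theorem wordBracket_append (l : List L) {l' : List L} (hl' : l' ≠ []) :
    wordBracket (l ++ l') = (l.map (LieAlgebra.ad ℚ L)).prod (wordBracket l') := by
  induction l with
  | nil => simp
  | cons a l ih =>
    rw [List.cons_append, wordBracket_cons a (List.append_ne_nil_of_right_ne_nil l hl'), ih,
      List.map_cons, List.prod_cons, Module.End.mul_apply, LieAlgebra.ad_apply]

theorem wordBracket_mem_lowerCentralSeries (n : ℕ) (l : List L) (hl : n < l.length) :
    wordBracket l ∈ LieModule.lowerCentralSeries ℚ L L n := by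
  induction n generalizing l with
  | zero => simp
  | succ n ih =>
    match l with
    | [] | [_] => simp at hl
    | a :: b :: l =>
      rw [LieModule.lowerCentralSeries_succ]
      exact LieSubmodule.lie_mem_lie (LieSubmodule.mem_top a) (ih (b :: l) (by simpa using hl))

/-- The normalized right-nested bracketing map of Dynkin: the word `x₁ ⋯ xₙ` goes to
`n⁻¹ • ⁅f x₁, ⁅…, f xₙ⁆⁆`.  The empty word goes to `0`. -/
noncomputable def dynkinMap (f : X → L) : WordAlgebra X →ₗ[ℚ] L :=
  linearExt fun w => (w.length : ℚ)⁻¹ • wordBracket (w.toList.map f)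

theorem dynkinMap_word (f : X → L) (w : FreeMonoid X) :
    dynkinMap f (word w) = (w.length : ℚ)⁻¹ • wordBracket (w.toList.map f) :=
  linearExt_word _ w

theorem dynkinMap_eq_zero (hnil : LieModule.lowerCentralSeries ℚ L L N = ⊥) (f : X → L)
    (ha : a ∈ wordSpan X (Set.Ici (N + 1))) : dynkinMap f a = 0 := by
  suffices wordSpan X (Set.Ici (N + 1)) ≤ LinearMap.ker (dynkinMap f) from this ha
  refine wordSpan_le.2 fun w hw => ?_
  have h := wordBracket_mem_lowerCentralSeries N (w.toList.map f) (by rwa [List.length_map])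
  rw [hnil, LieSubmodule.mem_bot] at h
  rw [LinearMap.mem_ker, dynkinMap_word, h, smul_zero]

theorem dynkinMap_word_mul (f : X → L) (v : FreeMonoid X) {w : FreeMonoid X} (hw : w.length ≠ 0) :
    ((v.length + w.length : ℕ) : ℚ) • dynkinMap f (word v * word w) =
      (w.length : ℚ) • evalWords (fun x => LieAlgebra.ad ℚ L (f x)) (word v)
        (dynkinMap f (word w)) := by
  have hw' : w.toList.map f ≠ [] := by
    rwa [← List.length_pos_iff, List.length_map, Nat.pos_iff_ne_zero]
  have hvw : ((v.length + w.length : ℕ) : ℚ) ≠ 0 := by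
    rw [Nat.cast_ne_zero]
    lia
  rw [← word_mul, dynkinMap_word, dynkinMap_word, FreeMonoid.length_mul, FreeMonoid.toList_mul,
    List.map_append, wordBracket_append _ hw', smul_inv_smul₀ hvw, map_smul,
    smul_inv_smul₀ (Nat.cast_ne_zero.2 hw), evalWords_word, FreeMonoid.lift_apply, List.map_map]
  rfl

theorem dynkinMap_mul (f : X → L) {m n : ℕ} (hn : n ≠ 0) (ha : a ∈ wordSpan X {m})
    (hb : b ∈ wordSpan X {n}) :
    ((m + n : ℕ) : ℚ) • dynkinMap f (a * b) =
      (n : ℚ) • evalWords (fun x => LieAlgebra.ad ℚ L (f x)) a (dynkinMap f b) := by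
  induction ha, hb using Submodule.span_induction₂ with
  | mem_mem a b ha hb =>
    obtain ⟨v, rfl, rfl⟩ := ha
    obtain ⟨w, rfl, rfl⟩ := hb
    exact dynkinMap_word_mul f v hn
  | zero_left b _ => simp
  | zero_right a _ => simp
  | add_left a a' b _ _ _ h h' => simp only [add_mul, map_add, smul_add, h, h', LinearMap.add_apply]
  | add_right a b b' _ _ _ h h' => simp only [mul_add, map_add, smul_add, h, h']
  | smul_left c a b _ _ h =>
    rw [smul_mul_assoc, map_smul, map_smul, smul_comm, h, LinearMap.smul_apply, smul_comm]
  | smul_right c a b _ _ h =>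
    rw [mul_smul_comm, map_smul, map_smul, map_smul, smul_comm, h, smul_comm]

theorem lift_comp_apply (g : L →ₗ⁅ℚ⁆ L') (f : X → L) (u : FreeLieAlgebra ℚ X) :
    FreeLieAlgebra.lift ℚ (g ∘ f) u = g (FreeLieAlgebra.lift ℚ f u) := by
  suffices h : FreeLieAlgebra.lift ℚ (g ∘ f) = g.comp (FreeLieAlgebra.lift ℚ f) from
    LieHom.congr_fun h u
  ext x
  simp

theorem freeLieAlgebra_induction {p : FreeLieAlgebra ℚ X → Prop} (u : FreeLieAlgebra ℚ X)
    (of : ∀ x, p (FreeLieAlgebra.of ℚ x)) (zero : p 0) (add : ∀ u v, p u → p v → p (u + v))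
    (smul : ∀ (c : ℚ) u, p u → p (c • u)) (lie : ∀ u v, p u → p v → p ⁅u, v⁆) : p u := by
  let K : LieSubalgebra ℚ (FreeLieAlgebra ℚ X) :=
    { carrier := {u | p u}
      zero_mem' := zero
      add_mem' := add _ _
      smul_mem' := smul
      lie_mem' := lie _ _ }
  have h : K.incl.comp (FreeLieAlgebra.lift ℚ fun x => ⟨FreeLieAlgebra.of ℚ x, of x⟩) =
      LieHom.id := by
    ext x
    simp
  rw [← LieHom.id_apply (R := ℚ) u, ← h]
  exact Subtype.prop _

/-- The canonical homomorphism from the free Lie algebra to the free associative algebra. -/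
noncomputable def ofFreeLie (X : Type*) : FreeLieAlgebra ℚ X →ₗ⁅ℚ⁆ WordAlgebra X :=
  FreeLieAlgebra.lift ℚ letter

theorem ofFreeLie_of (x : X) : ofFreeLie X (FreeLieAlgebra.of ℚ x) = letter x :=
  FreeLieAlgebra.lift_of_apply _ x

theorem evalWords_ofFreeLie {R : Type*} [Ring R] [Algebra ℚ R] (f : X → R)
    (u : FreeLieAlgebra ℚ X) : evalWords f (ofFreeLie X u) = FreeLieAlgebra.lift ℚ f u := by
  have h : (evalWords f : WordAlgebra X →ₗ⁅ℚ⁆ R) ∘ letter = f := funext (evalWords_letter f)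
  conv_rhs => rw [← h]
  exact (lift_comp_apply (evalWords f : WordAlgebra X →ₗ⁅ℚ⁆ R) letter u).symm

theorem ofFreeLie_mem_wordSpan (u : FreeLieAlgebra ℚ X) :
    ofFreeLie X u ∈ wordSpan X (Set.Ici 1) := by
  induction u using freeLieAlgebra_induction with
  | of x =>
    rw [ofFreeLie_of]
    exact wordSpan_mono (Set.singleton_subset_iff.2 le_rfl) (letter_mem_wordSpan x)
  | zero => simp
  | add u v hu hv => simpa only [map_add] using add_mem hu hv
  | smul c u hu => simpa only [map_smul] using Submodule.smul_mem _ c hu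
  | lie u v hu hv =>
    have hle := wordSpan_mono (X := X) (Set.Ici_subset_Ici.2 (Nat.le_add_right 1 1))
    rw [LieHom.map_lie, LieRing.of_associative_ring_bracket]
    exact sub_mem (hle (mul_mem_wordSpan_Ici hu hv)) (hle (mul_mem_wordSpan_Ici hv hu))

/-- `u` is homogeneous of degree `n > 0`, and Dynkin's map inverts `ofFreeLie` on `u`. -/
def IsDynkinFixed (f : X → L) (n : ℕ) (u : FreeLieAlgebra ℚ X) : Prop :=
  n ≠ 0 ∧ ofFreeLie X u ∈ wordSpan X {n} ∧ dynkinMap f (ofFreeLie X u) = FreeLieAlgebra.lift ℚ f u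

theorem isDynkinFixed_of (f : X → L) (x : X) : IsDynkinFixed f 1 (FreeLieAlgebra.of ℚ x) := by
  refine ⟨one_ne_zero, ?_, ?_⟩
  · rw [ofFreeLie_of]
    exact letter_mem_wordSpan x
  · rw [ofFreeLie_of, FreeLieAlgebra.lift_of_apply, letter, dynkinMap_word]
    simp [wordBracket]

theorem evalWords_ad_ofFreeLie (f : X → L) (u : FreeLieAlgebra ℚ X) (y : L) :
    evalWords (fun x => LieAlgebra.ad ℚ L (f x)) (ofFreeLie X u) y =
      ⁅FreeLieAlgebra.lift ℚ f u, y⁆ := by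
  rw [evalWords_ofFreeLie]
  exact congrArg (· y) (lift_comp_apply (LieAlgebra.ad ℚ L) f u)

theorem IsDynkinFixed.lie {f : X → L} {m n : ℕ} {u v : FreeLieAlgebra ℚ X}
    (hu : IsDynkinFixed f m u) (hv : IsDynkinFixed f n v) : IsDynkinFixed f (m + n) ⁅u, v⁆ := by
  obtain ⟨hm, hum, hu⟩ := hu
  obtain ⟨hn, hvn, hv⟩ := hv
  have hmn : m + n ≠ 0 := by lia
  refine ⟨hmn, ?_, ?_⟩
  · rw [LieHom.map_lie, LieRing.of_associative_ring_bracket]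
    have huv := mul_mem_wordSpan hum hvn
    have hvu := mul_mem_wordSpan hvn hum
    rw [Set.singleton_add_singleton] at huv hvu
    exact sub_mem huv (add_comm n m ▸ hvu)
  · have huv := dynkinMap_mul f hn hum hvn
    have hvu := dynkinMap_mul f hm hvn hum
    rw [evalWords_ad_ofFreeLie, hv] at huv
    rw [evalWords_ad_ofFreeLie, hu, add_comm n m, ← lie_skew] at hvu
    refine smul_right_injective L (Nat.cast_ne_zero (R := ℚ).2 hmn) ?_
    simp only [LieHom.map_lie, LieRing.of_associative_ring_bracket (ofFreeLie X u), map_sub,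
      smul_sub, huv, hvu]
    push_cast
    module

theorem mem_span_isDynkinFixed (f : X → L) (u : FreeLieAlgebra ℚ X) :
    u ∈ Submodule.span ℚ {u | ∃ n, IsDynkinFixed f n u} := by
  induction u using freeLieAlgebra_induction with
  | of x => exact Submodule.subset_span ⟨1, isDynkinFixed_of f x⟩
  | zero => exact zero_mem _
  | add u v hu hv => exact add_mem hu hv
  | smul c u hu => exact Submodule.smul_mem _ c hu
  | lie u v hu hv =>
    induction hu, hv using Submodule.span_induction₂ with
    | mem_mem u v hu hv =>
      obtain ⟨m, hm⟩ := hu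
      obtain ⟨n, hn⟩ := hv
      exact Submodule.subset_span ⟨m + n, hm.lie hn⟩
    | zero_left => simp
    | zero_right => simp
    | add_left u u' v _ _ _ h h' => simpa only [add_lie] using add_mem h h'
    | add_right u v v' _ _ _ h h' => simpa only [lie_add] using add_mem h h'
    | smul_left c u v _ _ h => simpa only [smul_lie] using Submodule.smul_mem _ c h
    | smul_right c u v _ _ h => simpa only [lie_smul] using Submodule.smul_mem _ c h

/-- The **Dynkin–Specht–Wever theorem**. -/
theorem dynkinMap_ofFreeLie (f : X → L) (u : FreeLieAlgebra ℚ X) :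
    dynkinMap f (ofFreeLie X u) = FreeLieAlgebra.lift ℚ f u := by
  induction mem_span_isDynkinFixed f u using Submodule.span_induction with
  | mem u hu => exact hu.choose_spec.2.2
  | zero => simp
  | add u v _ _ hu hv => simp only [map_add, hu, hv]
  | smul c u _ hu => simp only [map_smul, hu]

end DynkinSpechtWever

section Dynkin

theorem sum_smul_word_pow {X ι : Type*} [Fintype ι] (c : ι → ℚ) (w : ι → FreeMonoid X) (m : ℕ) :
    (∑ i, c i • word (w i)) ^ m = ∑ f : Fin m → ι,
      (List.ofFn fun i => c (f i)).prod • word (List.ofFn fun i => w (f i)).prod := by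
  induction m with
  | zero => simp [word_one]
  | succ m ih =>
    rw [pow_succ', ih, Finset.sum_mul_sum, ← Finset.sum_product', Finset.univ_product_univ]
    refine Fintype.sum_equiv (Fin.consEquiv fun _ => ι) _ _ fun p => ?_
    simp [List.ofFn_succ, word_mul, smul_smul, mul_comm]

theorem prod_map_expMulCoeff (ps : List (ℕ × ℕ)) :
    (ps.map expMulCoeff).prod = if ps.all fun pq => 0 < pq.1 + pq.2 then
      (((ps.map fun pq => pq.1.factorial * pq.2.factorial).prod : ℕ) : ℚ)⁻¹ else 0 := by
  induction ps with
  | nil => simp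
  | cons pq ps ih =>
    rw [List.map_cons, List.prod_cons, ih, expMulCoeff]
    by_cases h : 0 < pq.1 + pq.2
    · simp only [h, List.all_cons, decide_true, Bool.true_and, if_true, List.map_cons,
        List.prod_cons]
      split_ifs
      · rw [Nat.cast_mul (pq.1.factorial * pq.2.factorial), mul_inv]
      · rw [mul_zero]
    · simp [h]

theorem dynkinCoeff_eq (ps : List (ℕ × ℕ)) :
    dynkinCoeff ps = (-1) ^ (ps.length - 1) / ps.length * (ps.map expMulCoeff).prod *
      (((ps.map fun pq => pq.1 + pq.2).sum : ℕ) : ℚ)⁻¹ := by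
  rw [dynkinCoeff, prod_map_expMulCoeff]
  split_ifs
  · simp only [div_eq_mul_inv, mul_inv]
    ring
  · rw [mul_zero, zero_mul]

theorem dynkinMap_prod_powMulPow (x y : L) (ps : List (ℕ × ℕ)) :
    dynkinMap ![x, y] (word (ps.map powMulPow).prod) =
      (((ps.map fun pq => pq.1 + pq.2).sum : ℕ) : ℚ)⁻¹ • dynkinTerm x y ps := by
  have hlist : (ps.map powMulPow).prod.toList =
      (ps.map fun pq => List.replicate pq.1 0 ++ List.replicate pq.2 1).flatten := by
    simp only [FreeMonoid.toList_prod, List.map_map, Function.comp_def, toList_powMulPow]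
  have hlen : (ps.map powMulPow).prod.length = (ps.map fun pq => pq.1 + pq.2).sum := by
    simp [FreeMonoid.length, hlist, Function.comp_def]
  have hmap : (ps.map powMulPow).prod.toList.map ![x, y] =
      (ps.map fun pq => List.replicate pq.1 x ++ List.replicate pq.2 y).flatten := by
    simp [hlist, Function.comp_def]
  rw [dynkinMap_word, hlen, hmap, dynkinTerm]

theorem truncEval_log_succ {R : Type*} [Ring R] [Algebra ℚ R] (N : ℕ) (a : R) :
    truncEval (N + 1) (PowerSeries.log ℚ) a =
      ∑ n ∈ Finset.range N, ((-1 : ℚ) ^ n / (n + 1 : ℕ)) • a ^ (n + 1) := by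
  rw [truncEval_eq_sum, Finset.sum_range_succ']
  simp [PowerSeries.coeff_log, pow_succ]

theorem bch_eq_dynkinMap_logMulExp (N : ℕ) (x y : L) :
    bch N x y = dynkinMap ![x, y] (logMulExp N (letter 0) (letter 1)) := by
  rw [logMulExp, truncEval_exp_mul_truncEval_exp_sub_one, truncEval_log_succ, map_sum, bch]
  refine Finset.sum_congr rfl fun n _ => ?_
  rw [sum_smul_word_pow, map_smul, map_sum, Finset.smul_sum]
  refine Finset.sum_congr rfl fun f _ => ?_
  set ps := List.ofFn fun i => (((f i).1 : ℕ), ((f i).2 : ℕ)) with hps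
  have hcoeff : (List.ofFn fun i => expMulCoeff ((f i).1, (f i).2)) = ps.map expMulCoeff := by
    rw [hps, List.map_ofFn, Function.comp_def]
  have hword : (List.ofFn fun i => powMulPow ((f i).1, (f i).2)) = ps.map powMulPow := by
    rw [hps, List.map_ofFn, Function.comp_def]
  have hlen : ps.length = n + 1 := List.length_ofFn
  rw [hcoeff, hword, map_smul, dynkinMap_prod_powMulPow, smul_smul, smul_smul, dynkinCoeff_eq,
    hlen, Nat.add_sub_cancel, mul_assoc]

end Dynkin

section FreeNilpotent

open IsNilpotent (exp)

attribute [local instance] LieRing.ofAssociativeRing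

variable {X : Type*} {N : ℕ}

/-- The ideal spanned by the words of length greater than `N`. -/
noncomputable def longWordIdeal (X : Type*) (N : ℕ) : Ideal (WordAlgebra X) where
  __ := wordSpan X (Set.Ici (N + 1))
  smul_mem' a b hb := by
    have h := mul_mem_wordSpan_Ici (mem_wordSpan_Ici_zero a) hb
    rwa [zero_add] at h

theorem mem_longWordIdeal {a : WordAlgebra X} :
    a ∈ longWordIdeal X N ↔ a ∈ wordSpan X (Set.Ici (N + 1)) :=
  Iff.rfl

instance (N : ℕ) : (longWordIdeal X N).IsTwoSided :=
  ⟨fun b ha => by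
    rw [mem_longWordIdeal] at ha ⊢
    have h := mul_mem_wordSpan_Ici ha (mem_wordSpan_Ici_zero b)
    rwa [add_zero] at h⟩

/-- The free nilpotent associative algebra on `X`, in which products of more than `N` generators
vanish. -/
abbrev TruncWordAlgebra (X : Type*) (N : ℕ) := WordAlgebra X ⧸ longWordIdeal X N

/-- The quotient map onto the free nilpotent associative algebra. -/
noncomputable def truncWords (X : Type*) (N : ℕ) : WordAlgebra X →ₐ[ℚ] TruncWordAlgebra X N :=
  Ideal.Quotient.mkₐ ℚ (longWordIdeal X N)

theorem truncWords_eq_zero {a : WordAlgebra X} :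
    truncWords X N a = 0 ↔ a ∈ wordSpan X (Set.Ici (N + 1)) :=
  Ideal.Quotient.eq_zero_iff_mem.trans mem_longWordIdeal

theorem truncWords_eq {a b : WordAlgebra X} :
    truncWords X N a = truncWords X N b ↔ a - b ∈ wordSpan X (Set.Ici (N + 1)) := by
  rw [← truncWords_eq_zero, map_sub, sub_eq_zero]

theorem longProdsVanish_truncWords {Y : Type*} {f : Y → WordAlgebra X}
    (hf : ∀ y, f y ∈ wordSpan X (Set.Ici 1)) : LongProdsVanish N (truncWords X N ∘ f) := by
  have lift_mem (w : FreeMonoid Y) : FreeMonoid.lift f w ∈ wordSpan X (Set.Ici w.length) := by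
    induction w using FreeMonoid.inductionOn' with
    | one => exact mem_wordSpan_Ici_zero _
    | of_mul y w ih =>
      rw [map_mul, FreeMonoid.lift_eval_of, FreeMonoid.length_mul, FreeMonoid.length_of]
      exact mul_mem_wordSpan_Ici (hf y) ih
  intro w hw
  have h := truncWords_eq_zero.2 (wordSpan_mono (Set.Ici_subset_Ici.2 hw) (lift_mem w))
  exact (FreeMonoid.hom_map_lift (truncWords X N : _ →* TruncWordAlgebra X N) f w).symm.trans h

/-- The image of the free Lie algebra in the free nilpotent associative algebra. -/
noncomputable def truncFreeLie (X : Type*) (N : ℕ) :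
    FreeLieAlgebra ℚ X →ₗ⁅ℚ⁆ TruncWordAlgebra X N :=
  (truncWords X N : WordAlgebra X →ₗ⁅ℚ⁆ TruncWordAlgebra X N).comp (ofFreeLie X)

theorem truncFreeLie_apply (u : FreeLieAlgebra ℚ X) :
    truncFreeLie X N u = truncWords X N (ofFreeLie X u) :=
  rfl

theorem longProdsVanish_truncFreeLie {Y : Type*} (f : Y → FreeLieAlgebra ℚ X) :
    LongProdsVanish N (truncFreeLie X N ∘ f) :=
  longProdsVanish_truncWords fun y => ofFreeLie_mem_wordSpan (f y)

theorem isNilpotent_truncFreeLie (u : FreeLieAlgebra ℚ X) : IsNilpotent (truncFreeLie X N u) :=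
  ⟨N + 1, (longProdsVanish_truncFreeLie fun _ : Unit => u).pow_eq_zero ()⟩

theorem exists_ofFreeLie_sub_logMulExp_mem (N : ℕ) : ∃ k : FreeLieAlgebra ℚ (Fin 2),
    ofFreeLie (Fin 2) k - logMulExp N (letter 0) (letter 1) ∈
      wordSpan (Fin 2) (Set.Ici (N + 1)) := by
  obtain ⟨k, hk⟩ := (longProdsVanish_truncFreeLie (N := N) (FreeLieAlgebra.of ℚ)).logMulExp_mem
    (K := (truncFreeLie (Fin 2) N).range) fun i => ⟨_, rfl⟩
  refine ⟨k, truncWords_eq.1 ?_⟩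
  rw [map_logMulExp, ← ofFreeLie_of, ← ofFreeLie_of]
  exact hk

/-- `g` is the exponential of a lift of `x` to the free Lie algebra on `L`, taken in the free
nilpotent associative algebra.  Since `L` itself need not embed in an associative algebra in which
exponentials make sense, this replaces `g = exp x`. -/
def IsFormalExp (N : ℕ) (x : L) (g : TruncWordAlgebra L N) : Prop :=
  ∃ u : FreeLieAlgebra ℚ L, FreeLieAlgebra.lift ℚ id u = x ∧ exp (truncFreeLie L N u) = g

theorem exists_isFormalExp (N : ℕ) (x : L) : ∃ g, IsFormalExp N x g :=
  ⟨_, FreeLieAlgebra.of ℚ x, FreeLieAlgebra.lift_of_apply _ _, rfl⟩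

theorem isFormalExp_zero (N : ℕ) : IsFormalExp N (0 : L) 1 :=
  ⟨0, map_zero _, by rw [map_zero, IsNilpotent.exp_zero]⟩

namespace IsFormalExp

variable {x y : L} {g h : TruncWordAlgebra L N}

theorem exists_neg (hx : IsFormalExp N x g) :
    ∃ g', IsFormalExp N (-x) g' ∧ g * g' = 1 ∧ g' * g = 1 := by
  obtain ⟨u, rfl, rfl⟩ := hx
  refine ⟨exp (-truncFreeLie L N u), ⟨-u, map_neg _ _, by rw [map_neg]⟩, ?_, ?_⟩
  · exact IsNilpotent.exp_mul_exp_neg_self (isNilpotent_truncFreeLie u)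
  · exact IsNilpotent.exp_neg_mul_exp_self (isNilpotent_truncFreeLie u)

theorem unique (hnil : LieModule.lowerCentralSeries ℚ L L N = ⊥) (hx : IsFormalExp N x g)
    (hy : IsFormalExp N y g) : x = y := by
  obtain ⟨u, rfl, hu⟩ := hx
  obtain ⟨v, rfl, hv⟩ := hy
  have huv := eq_of_exp_eq_exp (isNilpotent_truncFreeLie u) (isNilpotent_truncFreeLie v)
    (hu.trans hv.symm)
  rw [truncFreeLie_apply, truncFreeLie_apply, truncWords_eq] at huv
  have h := dynkinMap_eq_zero hnil id huv
  rwa [map_sub, dynkinMap_ofFreeLie, dynkinMap_ofFreeLie, sub_eq_zero] at h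

theorem bch (hnil : LieModule.lowerCentralSeries ℚ L L N = ⊥) (hx : IsFormalExp N x g)
    (hy : IsFormalExp N y h) : IsFormalExp N (bch N x y) (g * h) := by
  obtain ⟨u, rfl, rfl⟩ := hx
  obtain ⟨v, rfl, rfl⟩ := hy
  obtain ⟨k, hk⟩ := exists_ofFreeLie_sub_logMulExp_mem N
  refine ⟨FreeLieAlgebra.lift ℚ ![u, v] k, ?_, ?_⟩
  · have hcomp : FreeLieAlgebra.lift ℚ id ∘ ![u, v] =
        ![FreeLieAlgebra.lift ℚ id u, FreeLieAlgebra.lift ℚ (id : L → L) v] := by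
      funext i
      fin_cases i <;> rfl
    have h := dynkinMap_eq_zero hnil (FreeLieAlgebra.lift ℚ (id : L → L) ∘ ![u, v]) hk
    rw [map_sub, dynkinMap_ofFreeLie, lift_comp_apply, hcomp, sub_eq_zero] at h
    rw [h, bch_eq_dynkinMap_logMulExp]
  · have hvan := longProdsVanish_truncFreeLie (N := N) ![u, v]
    have h := hvan.evalWords_eq_zero hk
    rw [map_sub, evalWords_ofFreeLie, lift_comp_apply, map_logMulExp, evalWords_letter,
      evalWords_letter, sub_eq_zero] at h
    rw [h, hvan.exp_logMulExp]
    rfl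

end IsFormalExp

end FreeNilpotent

/-- In a nilpotent Lie algebra `L` over ℚ, the Baker-Campbell-Hausdorff
product makes `L` into a group, with identity `0` and inverse `x ↦ -x`. -/
theorem bch_group
    (N : ℕ) (hnil : LieModule.lowerCentralSeries ℚ L L N = ⊥) :
    (∀ x y z : L, bch N (bch N x y) z = bch N x (bch N y z)) ∧
    (∀ x : L, bch N x 0 = x) ∧
    (∀ x : L, bch N 0 x = x) ∧
    (∀ x : L, bch N x (-x) = 0) ∧
    (∀ x : L, bch N (-x) x = 0) := by
  have hzero := isFormalExp_zero (L := L) N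
  refine ⟨fun x y z => ?_, fun x => ?_, fun x => ?_, fun x => ?_, fun x => ?_⟩ <;>
    obtain ⟨g, hx⟩ := exists_isFormalExp N x
  · obtain ⟨h, hy⟩ := exists_isFormalExp N y
    obtain ⟨k, hz⟩ := exists_isFormalExp N z
    have hxyz := (hx.bch hnil hy).bch hnil hz
    rw [mul_assoc] at hxyz
    exact hxyz.unique hnil (hx.bch hnil (hy.bch hnil hz))
  · exact (mul_one g ▸ hx.bch hnil hzero).unique hnil hx
  · exact (one_mul g ▸ hzero.bch hnil hx).unique hnil hx
  · obtain ⟨g', hneg, hgg', -⟩ := hx.exists_neg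
    exact (hgg' ▸ hx.bch hnil hneg).unique hnil hzero
  · obtain ⟨g', hneg, -, hg'g⟩ := hx.exists_neg
    exact (hg'g ▸ hneg.bch hnil hx).unique hnil hzero

end Paper
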